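/- Let (f,T) ∈ 𝓒^1 × 𝓔^1. If either (i) Ω(f,T) is T-minimal, or (ii) (f,T) has a unique maximizing measure, then K(f,T) = Ω(f,T). -/

import Mathlib

/-!
Write `β = β(f,T)` and normalise the potential to `φ = f - β`. Expansion makes inverse branches
contract, so every orbit segment can be replaced by one with a prescribed end point at a cost
proportional to the distance of the end points, uniformly in the length of the segment. Hence the
largest Birkhoff sums of `φ` over the segments of length `n` ending at `x` are Lipschitz in `x` and
bounded uniformly in `n`, and their upper limit is a Lipschitz calibrated sub-action.

For any sub-action `g` the defects `g ∘ T - g - φ` are non-negative. Along the almost closed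
segments that make a point non-wandering they sum to almost zero, so they vanish in the limit; this
puts `Ω(f,T)` inside `Λ_{f,T,g}`.

Conversely, the defects vanish along the forward orbit and along some backward orbit of a point
`x ∈ Λ_{f,T,g}`. If these two orbits have a common limit point, then shadowing joins the forward
orbit to the backward one near it, and `x` is non-wandering. A common limit point exists because
both limit sets contain `Ω(f,T)` when the latter is minimal, and because both have full measure for
the unique maximizing measure in the other case.
-/

open MeasureTheory Topology Filter Set
open scoped UniformConvergence

noncomputable section

/-- The circle `ℝ/ℤ`. -/
abbrev Circle1 : Type := AddCircle (1 : ℝ)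

/-- The canonical representative in `[0,1)` of a point of `ℝ/ℤ`. -/
noncomputable def rep (z : Circle1) : ℝ := (AddCircle.equivIco 1 0 z : ℝ)

/-- The circle map induced by a lift `F : ℝ → ℝ`. -/
noncomputable def cmap (F : ℝ → ℝ) : Circle1 → Circle1 := fun z => ((F (rep z) : ℝ) : Circle1)

/-- The data determining the `C^r` topology: all derivatives of order `≤ r`, viewed in the
space of functions `ℝ → ℝ` with the uniform-convergence topology. -/
noncomputable def crSeq (r : ℕ∞) (f : ℝ → ℝ) : ℕ → (ℝ →ᵤ ℝ) :=
  fun k => UniformFun.ofFun (if (k : ℕ∞) ≤ r then iteratedDeriv k f else 0)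

/-- The space `𝓒^r` of `C^r` functions `ℝ/ℤ → ℝ`. -/
def CrFun (r : ℕ∞) : Type := {f : Circle1 → ℝ // ContDiff ℝ r fun x : ℝ => f ↑x}

/-- The `C^r` topology on `𝓒^r`. -/
noncomputable instance (r : ℕ∞) : TopologicalSpace (CrFun r) :=
  TopologicalSpace.induced (fun f : CrFun r => crSeq r fun x : ℝ => f.1 ↑x) inferInstance

/-- `F : ℝ → ℝ` is a lift of a `C^r` expanding circle map: it is `C^r`, sends `x+1` to
`F x + d` for a fixed integer `d`, and `|(Fⁿ)'| ≥ C λⁿ` for some `C > 0`, `λ > 1`. -/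
def ExpandingLift (r : ℕ∞) (F : ℝ → ℝ) : Prop :=
  ContDiff ℝ r F ∧ (∃ d : ℤ, ∀ x : ℝ, F (x + 1) = F x + d) ∧
    ∃ C > (0 : ℝ), ∃ l > (1 : ℝ), ∀ n : ℕ, 1 ≤ n → ∀ x : ℝ, C * l ^ n ≤ |deriv (F^[n]) x|

/-- The space `𝓔^r` of (lifts of) `C^r` expanding circle maps, with the `C^r` topology. -/
def ExpMap (r : ℕ∞) : Type := {F : ℝ → ℝ // ExpandingLift r F}

noncomputable instance (r : ℕ∞) : TopologicalSpace (ExpMap r) :=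
  TopologicalSpace.induced (fun F : ExpMap r => crSeq r F.1) inferInstance

/-- `μ` is a `T`-invariant Borel probability measure. -/
def InvProb (T : Circle1 → Circle1) (μ : Measure Circle1) : Prop :=
  IsProbabilityMeasure μ ∧ μ.map T = μ

/-- `β(f,T)`, the maximal ergodic average. -/
noncomputable def beta (f : Circle1 → ℝ) (T : Circle1 → Circle1) : ℝ :=
  sSup ((fun μ : Measure Circle1 => ∫ x, f x ∂μ) '' {μ | InvProb T μ})

/-- `μ` is a maximizing measure for `(f,T)`. -/
def IsMaximizing (f : Circle1 → ℝ) (T : Circle1 → Circle1) (μ : Measure Circle1) : Prop :=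
  InvProb T μ ∧ ∫ x, f x ∂μ = beta f T

/-- `μ` is a periodic measure: an invariant measure supported on a periodic orbit. -/
def IsPeriodicMeasure (T : Circle1 → Circle1) (μ : Measure Circle1) : Prop :=
  InvProb T μ ∧ ∃ x : Circle1, ∃ n : ℕ, 0 < n ∧ T^[n] x = x ∧
    μ (Set.range fun k : ℕ => T^[k] x) = 1

/-- `(f,T)` is uniquely maximized by a periodic measure. -/
def UniqMaxPeriodic (f : Circle1 → ℝ) (T : Circle1 → Circle1) : Prop :=
  ∃ μ : Measure Circle1, IsMaximizing f T μ ∧ IsPeriodicMeasure T μ ∧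
    ∀ ν : Measure Circle1, IsMaximizing f T ν → ν = μ

/-- A (continuous) sub-action for `(f,T)`. -/
def IsSubaction (f : Circle1 → ℝ) (T : Circle1 → Circle1) (g : Circle1 → ℝ) : Prop :=
  Continuous g ∧ ∀ x, g x + f x ≤ g (T x) + beta f T

/-- A calibrated sub-action for `(f,T)`. -/
def IsCalibrated (f : Circle1 → ℝ) (T : Circle1 → Circle1) (g : Circle1 → ℝ) : Prop :=
  IsSubaction f T g ∧ ∀ x, ∃ y, T y = x ∧ g y + f y = g x + beta f T

/-- `G_{f,T}`: the set of Lipschitz calibrated sub-actions of `(f,T)`. -/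
def Gset (f : Circle1 → ℝ) (T : Circle1 → Circle1) : Set (Circle1 → ℝ) :=
  {g | (∃ K : NNReal, LipschitzWith K g) ∧ IsCalibrated f T g}

/-- The set `E_{f,T,g}`. -/
def Eset (f : Circle1 → ℝ) (T : Circle1 → Circle1) (g : Circle1 → ℝ) : Set Circle1 :=
  {x | g x + f x = g (T x) + beta f T}

/-- The set `Λ*_{f,T,g}`. -/
def LambdaStar (f : Circle1 → ℝ) (T : Circle1 → Circle1) (g : Circle1 → ℝ) : Set Circle1 :=
  {x | ∀ n : ℕ, T^[n] x ∈ Eset f T g}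

/-- The set `Λ_{f,T,g}`. -/
def Lambda (f : Circle1 → ℝ) (T : Circle1 → Circle1) (g : Circle1 → ℝ) : Set Circle1 :=
  ⋂ n : ℕ, T^[n] '' LambdaStar f T g

/-- The set `K(f,T)`. -/
def Kset (f : Circle1 → ℝ) (T : Circle1 → Circle1) : Set Circle1 :=
  ⋃ g ∈ Gset f T, Lambda f T g

/-- The `(f,T)`-non-wandering set `Ω(f,T)`. -/
def OmegaSet (f : Circle1 → ℝ) (T : Circle1 → Circle1) : Set Circle1 :=
  {x | ∀ ε > (0 : ℝ), ∃ n : ℕ, 1 ≤ n ∧ ∃ z : Circle1, T^[n] z = x ∧ dist z x < ε ∧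
    |∑ i ∈ Finset.range n, (f (T^[i] z) - beta f T)| < ε}

/-- `A` is a periodic orbit of `T`. -/
def IsPeriodicOrbit (T : Circle1 → Circle1) (A : Set Circle1) : Prop :=
  ∃ x : Circle1, (∃ n : ℕ, 0 < n ∧ T^[n] x = x) ∧ A = Set.range fun k : ℕ => T^[k] x

/-- `A` is a `T`-minimal set: a nonempty compact invariant set with no proper nonempty
compact invariant subset. -/
def IsMinimalSet (T : Circle1 → Circle1) (A : Set Circle1) : Prop :=
  A.Nonempty ∧ IsCompact A ∧ T '' A ⊆ A ∧
    ∀ B ⊆ A, B.Nonempty → IsCompact B → T '' B ⊆ B → B = A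

/-- The space of `C^r` families of functions on the circle with `q` parameters,
i.e. maps `(t,x) ↦ f_t(x)` that are jointly `C^r` (the circle variable via a lift). -/
def FamFun (r : ℕ∞) (q : ℕ) : Type :=
  {G : ((Fin q → ℝ) × ℝ) → ℝ // ContDiff ℝ r G ∧ ∀ t x, G (t, x + 1) = G (t, x)}

noncomputable def famSeq (r : ℕ∞) (q : ℕ) (G : ((Fin q → ℝ) × ℝ) → ℝ) :
    (k : ℕ) → (((Fin q → ℝ) × ℝ) →ᵤ (((Fin q → ℝ) × ℝ) [×k]→L[ℝ] ℝ)) :=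
  fun k => UniformFun.ofFun (if (k : ℕ∞) ≤ r then iteratedFDeriv ℝ k G else 0)

/-- The `C^r` topology on the space of `C^r` families. -/
noncomputable instance (r : ℕ∞) (q : ℕ) : TopologicalSpace (FamFun r q) :=
  TopologicalSpace.induced (fun G : FamFun r q => famSeq r q G.1) inferInstance

/-- The member `f_t : ℝ/ℤ → ℝ` of a family, at the parameter `t`. -/
noncomputable def famMem {r : ℕ∞} {q : ℕ} (G : FamFun r q) (t : Fin q → ℝ) : Circle1 → ℝ :=
  fun z => G.1 (t, rep z)

/-- The product `m_∞` over `ℕ` of Lebesgue measure on `[0,1]`, realised as the pushforward of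
the Haar probability measure of the compact group `(ℝ/ℤ)^ℕ` under the coordinatewise choice of
representatives in `[0,1)`. -/
noncomputable def mInfty : Measure (ℕ → ℝ) :=
  Measure.map (fun (t : ℕ → Circle1) (n : ℕ) => rep (t n))
    (MeasureTheory.Measure.addHaarMeasure (⊤ : TopologicalSpace.PositiveCompacts (ℕ → Circle1)))

/-- `S` is an `N`-dimensionally shy subset of a normed real vector space `V`. -/
def NDimShy {V : Type*} [NormedAddCommGroup V] [NormedSpace ℝ V] (N : ℕ) (S : Set V) : Prop :=
  ∃ φ : Fin N → V, ∀ f : V,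
    volume {t : Fin N → ℝ | (∀ i, t i ∈ Set.Icc (0 : ℝ) 1) ∧ f + ∑ i, t i • φ i ∈ S} = 0

/-- `S` is a finite dimensionally shy subset of a normed real vector space `V`. -/
def FinDimShy {V : Type*} [NormedAddCommGroup V] [NormedSpace ℝ V] (S : Set V) : Prop :=
  ∃ N : ℕ, 0 < N ∧ NDimShy N S

/-- `S` is a shy subset of `V`: there are a compactly supported Borel probability measure `μ`
on `V` and a Borel set `S̃ ⊇ S` all of whose translates are `μ`-null. -/
def IsShy {V : Type*} [NormedAddCommGroup V] [NormedSpace ℝ V] (S : Set V) : Prop :=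
  letI : MeasurableSpace V := borel V
  ∃ μ : Measure V, μ Set.univ = 1 ∧ (∃ K : Set V, IsCompact K ∧ μ K = 1) ∧
    ∃ St : Set V, MeasurableSet St ∧ S ⊆ St ∧
      ∀ v : V, μ ((fun x => x + v) ⁻¹' St) = 0

/-- `S` is a prevalent subset of `V`. -/
def IsPrevalent {V : Type*} [NormedAddCommGroup V] [NormedSpace ℝ V] (S : Set V) : Prop :=
  IsShy Sᶜ

/-- `F` is the (normalized) lift of an orientation-preserving real analytic expanding circle
map of degree `d` fixing `π(0)`. -/
def AnalyticExpandingLift (F : ℝ → ℝ) (d : ℕ) : Prop :=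
  (∀ x : ℝ, AnalyticAt ℝ F x) ∧ (∀ x : ℝ, F (x + 1) = F x + d) ∧ StrictMono F ∧ F 0 = 0 ∧
    2 ≤ d ∧ ∃ C > (0 : ℝ), ∃ l > (1 : ℝ), ∀ n : ℕ, 1 ≤ n → ∀ x : ℝ, C * l ^ n ≤ |deriv (F^[n]) x|

/-- The inverse branches `τ_{i,n} = τ_{i_n} ∘ ⋯ ∘ τ_{i_1}`, where `τ = F⁻¹` and
`τ_i(x) = τ(x+i)`; the word `i` is indexed from `0`, so `i 0` is the first letter `i_1`. -/
noncomputable def tauIter (F : ℝ → ℝ) {d : ℕ} (i : ℕ → Fin d) : ℕ → ℝ → ℝ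
  | 0, x => x
  | n + 1, x => Function.invFun F (tauIter F i n x + ((i n : ℕ) : ℝ))

/-- The function `h^f_i` associated to an infinite word `i`. -/
noncomputable def hSum (F : ℝ → ℝ) {d : ℕ} (i : ℕ → Fin d) (f : Circle1 → ℝ) : ℝ → ℝ :=
  fun x => ∑' n : ℕ,
    (f ((tauIter F i (n + 1) x : ℝ) : Circle1) - f ((tauIter F i (n + 1) 0 : ℝ) : Circle1))

/-- The function `h^f_i` associated to a finite word of length `m` (the first `m` letters
of `i`). -/
noncomputable def hSumFin (F : ℝ → ℝ) {d : ℕ} (i : ℕ → Fin d) (m : ℕ) (f : Circle1 → ℝ) :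
    ℝ → ℝ :=
  fun x => ∑ n ∈ Finset.range m,
    (f ((tauIter F i (n + 1) x : ℝ) : Circle1) - f ((tauIter F i (n + 1) 0 : ℝ) : Circle1))

/-- `i ∈ CL(x,K)`: all backward images of `x` along the word `i` lie over `K`. -/
def WordIn (F : ℝ → ℝ) {d : ℕ} (i : ℕ → Fin d) (x : ℝ) (K : Set Circle1) : Prop :=
  ∀ n : ℕ, 1 ≤ n → ((tauIter F i n x : ℝ) : Circle1) ∈ K

/-- `x` (a real, lying over `K`) is an `f`-supercritical value of `K`. -/
def IsSupercriticalValue (F : ℝ → ℝ) (d : ℕ) (f : Circle1 → ℝ) (K : Set Circle1) (x : ℝ) :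
    Prop :=
  ((x : ℝ) : Circle1) ∈ K ∧ ∃ i j : ℕ → Fin d, WordIn F i x K ∧ WordIn F j x K ∧ i 0 ≠ j 0 ∧
    deriv (hSum F i f) x = deriv (hSum F j f) x

/-- `x` is a critical value of `T|K`. -/
def IsCriticalValue (T : Circle1 → Circle1) (K : Set Circle1) (x : Circle1) : Prop :=
  x ∈ K ∧ ∃ y z, y ∈ K ∧ z ∈ K ∧ y ≠ z ∧ T y = x ∧ T z = x

/-- A critical value `x` of `T|K` is regular: on each side of `x` there is a continuous
inverse branch of `T` selecting the unique preimage in `K`. -/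
def IsRegularCriticalValue (T : Circle1 → Circle1) (K : Set Circle1) (x : Circle1) : Prop :=
  ∃ U : Set Circle1, U ∈ 𝓝 x ∧ IsConnected U ∧
    ∀ b ∈ U \ {x}, ∃ s : Circle1 → Circle1,
      ContinuousOn s (connectedComponentIn (U \ {x}) b) ∧
      (∀ y ∈ connectedComponentIn (U \ {x}) b, T (s y) = y) ∧
      (∀ y ∈ K ∩ connectedComponentIn (U \ {x}) b, T ⁻¹' {y} ∩ K = {s y})

/-- `T|K` is Sturmian-like: every critical value is regular. -/
def SturmianLike (T : Circle1 → Circle1) (K : Set Circle1) : Prop :=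
  ∀ x, IsCriticalValue T K x → IsRegularCriticalValue T K x

/-- `f : ℝ/ℤ → ℝ` is a trigonometric polynomial. -/
def IsTrigPoly (f : Circle1 → ℝ) : Prop :=
  ∃ m : ℕ, ∃ a b : ℕ → ℝ, ∀ x : ℝ,
    f ↑x = a 0 + ∑ k ∈ Finset.range m,
      (a (k + 1) * Real.cos (2 * Real.pi * (k + 1) * x) +
        b (k + 1) * Real.sin (2 * Real.pi * (k + 1) * x))

end

/-! ### Birkhoff sums and backward shadowing -/

section BirkhoffSum

variable {X M : Type*} [AddCommGroup M]

theorem birkhoffSum_sub_const (T : X → X) (φ : X → M) (b : M) (n : ℕ) (x : X) :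
    birkhoffSum T (fun y => φ y - b) n x = birkhoffSum T φ n x - n • b := by
  simp [birkhoffSum]

theorem birkhoffSum_comp_sub_self (T : X → X) (g : X → M) (n : ℕ) (x : X) :
    birkhoffSum T (fun y => g (T y) - g y) n x = g (T^[n] x) - g x := by
  simp only [birkhoffSum, ← Function.iterate_succ_apply', Finset.sum_range_sub fun i => g (T^[i] x),
    Function.iterate_zero_apply]

theorem continuous_birkhoffSum [TopologicalSpace X] [TopologicalSpace M] [ContinuousAdd M]
    {T : X → X} {φ : X → M} (hφ : Continuous φ) (hT : Continuous T) (n : ℕ) :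
    Continuous (birkhoffSum T φ n) :=
  continuous_finsetSum _ fun i _ => hφ.comp (hT.iterate i)

end BirkhoffSum

/-- Every orbit segment `y, T y, …, Tⁿ y` can be replaced by a segment ending at a prescribed
point `w`, at the cost of moving the initial point and changing the Birkhoff sum of `φ` by at most
`C * dist w (Tⁿ y)`. The constant is uniform in `n`, and `w` need not be close to `Tⁿ y`. -/
def BackwardShadowing {X : Type*} [PseudoMetricSpace X] (T : X → X) (φ : X → ℝ) (C : NNReal) :
    Prop :=
  ∀ (n : ℕ) (y w : X), ∃ z, T^[n] z = w ∧ dist z y ≤ C * dist w (T^[n] y) ∧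
    |birkhoffSum T φ n z - birkhoffSum T φ n y| ≤ C * dist w (T^[n] y)

section BackwardShadowing

variable {X : Type*} [PseudoMetricSpace X] {T : X → X} {φ : X → ℝ}

theorem BackwardShadowing.sub_const {C : NNReal} (h : BackwardShadowing T φ C) (b : ℝ) :
    BackwardShadowing T (fun y => φ y - b) C := by
  simpa only [BackwardShadowing, birkhoffSum_sub_const, sub_sub_sub_cancel_right] using h

theorem sum_range_pow_sub_le {r : ℝ} (hr₀ : 0 ≤ r) (hr₁ : r < 1) (n : ℕ) :
    ∑ i ∈ Finset.range n, r ^ (n - i) ≤ (1 - r)⁻¹ := by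
  calc ∑ i ∈ Finset.range n, r ^ (n - i)
      ≤ ∑ i ∈ Finset.range n, r ^ (n - 1 - i) :=
        Finset.sum_le_sum fun i _ => pow_le_pow_of_le_one hr₀ hr₁.le (by omega)
    _ = ∑ i ∈ Finset.range n, r ^ i := Finset.sum_range_reflect (fun i => r ^ i) n
    _ ≤ ∑' i, r ^ i :=
        (summable_geometric_of_lt_one hr₀ hr₁).sum_le_tsum _ fun i _ => pow_nonneg hr₀ i
    _ = (1 - r)⁻¹ := tsum_geometric_of_lt_one hr₀ hr₁

theorem abs_birkhoffSum_sub_le_of_contraction {c r D : ℝ} (hc : 0 ≤ c) (hr₀ : 0 ≤ r) (hr₁ : r < 1)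
    (hD : 0 ≤ D) {K : NNReal} (hφ : LipschitzWith K φ) {n : ℕ} {y z : X}
    (h : ∀ i ≤ n, dist (T^[i] z) (T^[i] y) ≤ c * r ^ (n - i) * D) :
    |birkhoffSum T φ n z - birkhoffSum T φ n y| ≤ c * (K * (1 - r)⁻¹) * D := by
  calc |birkhoffSum T φ n z - birkhoffSum T φ n y|
      ≤ ∑ i ∈ Finset.range n, dist (φ (T^[i] z)) (φ (T^[i] y)) :=
        dist_birkhoffSum_birkhoffSum_le T φ n z y
    _ ≤ ∑ i ∈ Finset.range n, K * (c * r ^ (n - i) * D) :=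
        Finset.sum_le_sum fun i hi => (hφ.dist_le_mul _ _).trans <|
          mul_le_mul_of_nonneg_left (h i (Finset.mem_range.1 hi).le) K.2
    _ = c * (K * ∑ i ∈ Finset.range n, r ^ (n - i)) * D := by
        simp only [Finset.mul_sum, Finset.sum_mul]
        exact Finset.sum_congr rfl fun i _ => by ring
    _ ≤ c * (K * (1 - r)⁻¹) * D := by
        gcongr
        exact sum_range_pow_sub_le hr₀ hr₁ n

theorem exists_backwardShadowing_of_contraction {c r : ℝ} (hc : 0 ≤ c) (hr₀ : 0 ≤ r) (hr₁ : r < 1)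
    {K : NNReal} (hφ : LipschitzWith K φ)
    (h : ∀ (n : ℕ) (y w : X), ∃ z, T^[n] z = w ∧
      ∀ i ≤ n, dist (T^[i] z) (T^[i] y) ≤ c * r ^ (n - i) * dist w (T^[n] y)) :
    ∃ C, BackwardShadowing T φ C := by
  have hS : 0 ≤ (K : ℝ) * (1 - r)⁻¹ := mul_nonneg K.2 (inv_nonneg.2 (sub_nonneg.2 hr₁.le))
  refine ⟨.mk (c * (1 + K * (1 - r)⁻¹)) (by positivity), fun n y w => ?_⟩
  obtain ⟨z, hz, hzy⟩ := h n y w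
  refine ⟨z, hz, ?_, ?_⟩
  · calc dist z y ≤ c * r ^ n * dist w (T^[n] y) := hzy 0 n.zero_le
      _ ≤ c * (1 + K * (1 - r)⁻¹) * dist w (T^[n] y) := by
        gcongr
        exact (pow_le_one₀ hr₀ hr₁.le).trans (le_add_of_nonneg_right hS)
  · refine (abs_birkhoffSum_sub_le_of_contraction hc hr₀ hr₁ dist_nonneg hφ hzy).trans ?_
    rw [NNReal.coe_mk]
    gcongr
    exact le_add_of_nonneg_left zero_le_one

end BackwardShadowing

/-! ### Expanding circle maps -/

section Lift

variable {F : ℝ → ℝ} {c : ℝ}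

theorem mul_abs_sub_le_of_le_abs_deriv (hF : Differentiable ℝ F) (h : ∀ x, c ≤ |deriv F x|)
    (a b : ℝ) : c * |a - b| ≤ |F a - F b| := by
  wlog hab : a < b generalizing a b
  · rcases (not_lt.1 hab).eq_or_lt with rfl | hba
    · simp
    · simpa only [abs_sub_comm] using this b a hba
  obtain ⟨x, -, hx⟩ := exists_deriv_eq_slope F hab hF.continuous.continuousOn hF.differentiableOn
  have hslope : F b - F a = deriv F x * (b - a) := by
    rw [hx, div_mul_cancel₀ _ (sub_pos.2 hab).ne']
  rw [abs_sub_comm a, abs_sub_comm (F a), hslope, abs_mul]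
  gcongr
  exact h x

theorem surjective_of_le_abs_deriv (hF : ContDiff ℝ 1 F) (hc : 0 < c)
    (h : ∀ x, c ≤ |deriv F x|) : Function.Surjective F := by
  have hanti : AntilipschitzWith (Real.toNNReal c⁻¹) F :=
    AntilipschitzWith.of_le_mul_dist fun a b => by
      rw [Real.coe_toNNReal _ (inv_pos.2 hc).le, inv_mul_eq_div, le_div_iff₀' hc]
      exact mul_abs_sub_le_of_le_abs_deriv (hF.differentiable one_ne_zero) h a b
  have hproper : IsProperMap F := isProperMap_iff_tendsto_cocompact.2
    ⟨hF.continuous, by simpa only [Metric.cobounded_eq_cocompact] using hanti.tendsto_cobounded⟩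
  have hopen : IsOpenMap F := isOpenMap_of_hasStrictDerivAt
    (fun x => hF.contDiffAt.hasStrictDerivAt one_ne_zero)
    fun x => abs_pos.1 (hc.trans_le (h x))
  exact range_eq_univ.1 <|
    IsClopen.eq_univ ⟨hproper.isClosedMap.isClosed_range, hopen.isOpen_range⟩ (range_nonempty F)

end Lift

theorem coe_rep (z : Circle1) : ((rep z : ℝ) : Circle1) = z :=
  (AddCircle.equivIco 1 0).symm_apply_apply z

theorem dist_coe_le (a b : ℝ) : dist (a : Circle1) (b : Circle1) ≤ |a - b| := by
  rw [dist_eq_norm, ← AddCircle.coe_sub]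
  exact QuotientAddGroup.norm_mk_le_norm

theorem coe_intCast_eq_zero (k : ℤ) : ((k : ℝ) : Circle1) = 0 :=
  (AddCircle.coe_eq_zero_iff 1).2 ⟨k, by simp⟩

theorem exists_coe_eq_and_abs_sub_eq_dist (w : Circle1) (a : ℝ) :
    ∃ b : ℝ, (b : Circle1) = w ∧ |b - a| = dist w (a : Circle1) := by
  obtain ⟨b, rfl⟩ := QuotientAddGroup.mk_surjective w
  refine ⟨b - round (b - a), ?_, ?_⟩
  · rw [AddCircle.coe_sub, coe_intCast_eq_zero, sub_zero]
  · change _ = dist (b : Circle1) (a : Circle1)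
    rw [dist_eq_norm, ← AddCircle.coe_sub, UnitAddCircle.norm_eq, sub_right_comm]

theorem semiconj_coe_cmap {F : ℝ → ℝ} (hF : ∃ d : ℤ, ∀ x, F (x + 1) = F x + d) :
    Function.Semiconj ((↑) : ℝ → Circle1) F (cmap F) := by
  obtain ⟨d, hd⟩ := hF
  intro x
  let G : AddConstMap ℝ ℝ 1 (d : ℝ) := ⟨F, hd⟩
  obtain ⟨k, hk⟩ : ∃ k : ℤ, k • (1 : ℝ) = rep x - x :=
    (AddCircle.coe_eq_zero_iff 1).1 (by rw [AddCircle.coe_sub, coe_rep, sub_self])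
  have hrep : rep x = x + k := by
    rw [← sub_eq_iff_eq_add', ← hk, zsmul_one]
  have hG : F (x + k) = F x + k • (d : ℝ) := AddConstMapClass.map_add_int' G x k
  have hkd : ((k • (d : ℝ) : ℝ) : Circle1) = 0 := by
    rw [AddCircle.coe_zsmul, coe_intCast_eq_zero, smul_zero]
  rw [cmap, hrep, hG, AddCircle.coe_add, hkd, add_zero]

theorem continuous_cmap {F : ℝ → ℝ} (hF : Continuous F)
    (hper : ∃ d : ℤ, ∀ x, F (x + 1) = F x + d) : Continuous (cmap F) := by
  have hq : IsQuotientMap ((↑) : ℝ → Circle1) := isQuotientMap_quotient_mk'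
  rw [hq.continuous_iff, ← (semiconj_coe_cmap hper).comp_eq]
  exact (AddCircle.continuous_mk' 1).comp hF

theorem exists_cmap_iterate_eq_and_dist_le {F : ℝ → ℝ} (hF : ContDiff ℝ 1 F)
    (hper : ∃ d : ℤ, ∀ x, F (x + 1) = F x + d) {c l : ℝ} (hc : 0 < c) (hl : 0 < l)
    (hexp : ∀ n x, c * l ^ n ≤ |deriv F^[n] x|) (n : ℕ) (y w : Circle1) :
    ∃ z, (cmap F)^[n] z = w ∧ ∀ i ≤ n,
      dist ((cmap F)^[i] z) ((cmap F)^[i] y) ≤ c⁻¹ * l⁻¹ ^ (n - i) * dist w ((cmap F)^[n] y) := by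
  have hsurj : Function.Surjective F :=
    surjective_of_le_abs_deriv hF (by positivity) fun x => hexp 1 x
  have hiter (i : ℕ) (x : ℝ) : (cmap F)^[i] (x : Circle1) = (F^[i] x : ℝ) :=
    (((semiconj_coe_cmap hper).iterate_right i).eq x).symm
  obtain ⟨a, rfl⟩ := QuotientAddGroup.mk_surjective y
  obtain ⟨b, rfl, hb⟩ := exists_coe_eq_and_abs_sub_eq_dist w (F^[n] a)
  obtain ⟨x, rfl⟩ := hsurj.iterate n b
  refine ⟨x, hiter n x, fun i hi => ?_⟩
  have hcontr := mul_abs_sub_le_of_le_abs_deriv ((hF.differentiable one_ne_zero).iterate (n - i))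
    (hexp (n - i)) (F^[i] x) (F^[i] a)
  rw [← Function.iterate_add_apply, ← Function.iterate_add_apply, Nat.sub_add_cancel hi] at hcontr
  rw [hiter, hiter, hiter, ← hb, inv_pow, ← mul_inv, inv_mul_eq_div, le_div_iff₀' (by positivity)]
  exact (mul_le_mul_of_nonneg_left (dist_coe_le _ _) (by positivity)).trans hcontr

theorem exists_lipschitzWith_of_contDiff_coe {f : Circle1 → ℝ}
    (hf : ContDiff ℝ 1 fun x : ℝ => f x) : ∃ K, LipschitzWith K f := by
  have hper : Function.Periodic (deriv fun x : ℝ => f x) 1 := fun x => by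
    rw [← deriv_comp_add_const]
    simp
  obtain ⟨K, hK⟩ := (hper.isBounded_of_continuous one_ne_zero
    (hf.continuous_deriv le_rfl)).exists_norm_le
  have hlip : LipschitzWith K.toNNReal fun x : ℝ => f x :=
    lipschitzWith_of_nnnorm_deriv_le (hf.differentiable one_ne_zero) fun x =>
      NNReal.le_toNNReal_of_coe_le (hK _ ⟨x, rfl⟩)
  refine ⟨K.toNNReal, LipschitzWith.of_dist_le_mul fun y w => ?_⟩
  obtain ⟨a, rfl⟩ := QuotientAddGroup.mk_surjective y
  obtain ⟨b, rfl, hb⟩ := exists_coe_eq_and_abs_sub_eq_dist w a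
  rw [dist_comm (b : Circle1), ← Real.dist_eq, dist_comm b] at hb
  exact (hlip.dist_le_mul a b).trans_eq (by rw [hb])

theorem exists_backwardShadowing_cmap {f : Circle1 → ℝ} (hf : ContDiff ℝ 1 fun x : ℝ => f x)
    {F : ℝ → ℝ} (hF : ExpandingLift 1 F) : ∃ C, BackwardShadowing (cmap F) f C := by
  obtain ⟨hF, hper, c, hc, l, hl, hexp⟩ := hF
  obtain ⟨K, hK⟩ := exists_lipschitzWith_of_contDiff_coe hf
  have hexp_min (n : ℕ) (x : ℝ) : min c 1 * l ^ n ≤ |deriv F^[n] x| := by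
    rcases Nat.eq_zero_or_pos n with rfl | hn
    · simp
    · exact (mul_le_mul_of_nonneg_right (min_le_left c 1) (by positivity)).trans (hexp n hn x)
  exact exists_backwardShadowing_of_contraction (by positivity) (by positivity)
    (inv_lt_one_of_one_lt₀ hl) hK <|
    exists_cmap_iterate_eq_and_dist_le hF hper (lt_min hc one_pos) (one_pos.trans hl) hexp_min

/-! ### Invariant measures -/

/-- The invariant probability measures of a self-map of an arbitrary measurable space; on the circle
`μ ∈ invariantProbs T` unfolds to `InvProb T μ`. -/
def invariantProbs {X : Type*} [MeasurableSpace X] (T : X → X) : Set (Measure X) :=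
  {μ | IsProbabilityMeasure μ ∧ μ.map T = μ}

/-- The empirical measure of the orbit segment `x, T x, …, Tⁿ⁻¹ x`; it is the zero measure when
`n = 0`. -/
noncomputable def empiricalMeasure {X : Type*} [MeasurableSpace X] (T : X → X) (n : ℕ) (x : X) :
    Measure X :=
  (n : ENNReal)⁻¹ • ∑ i ∈ Finset.range n, Measure.dirac (T^[i] x)

section EmpiricalMeasure

variable {X : Type*} [MeasurableSpace X]

theorem isProbabilityMeasure_empiricalMeasure (T : X → X) {n : ℕ} (hn : n ≠ 0) (x : X) :
    IsProbabilityMeasure (empiricalMeasure T n x) where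
  measure_univ := by
    simp [empiricalMeasure, ENNReal.inv_mul_cancel, hn]

theorem integral_empiricalMeasure [MeasurableSingletonClass X] (T : X → X) (n : ℕ) (x : X)
    (φ : X → ℝ) : ∫ y, φ y ∂(empiricalMeasure T n x) = birkhoffAverage ℝ T φ n x := by
  rw [empiricalMeasure, integral_smul_measure,
    integral_finsetSum_measure fun i _ => integrable_dirac (by simp)]
  simp [birkhoffAverage, birkhoffSum]

end EmpiricalMeasure

section InvariantProbs

variable {X : Type*} [TopologicalSpace X] [MeasurableSpace X] [BorelSpace X] {T : X → X}

theorem integral_comp_of_mem_invariantProbs {φ : X → ℝ} (hφ : Continuous φ)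
    (hT : Continuous T) {μ : Measure X} (hμ : μ ∈ invariantProbs T) :
    ∫ x, φ (T x) ∂μ = ∫ x, φ x ∂μ := by
  rw [← integral_map hT.aemeasurable hφ.aestronglyMeasurable, hμ.2]

theorem mem_invariantProbs_of_integral_comp [HasOuterApproxClosed X] (hT : Continuous T)
    {μ : Measure X} [IsProbabilityMeasure μ]
    (h : ∀ φ : X → ℝ, Continuous φ → ∫ x, φ (T x) ∂μ = ∫ x, φ x ∂μ) :
    μ ∈ invariantProbs T := by
  have := Measure.isProbabilityMeasure_map (μ := μ) hT.aemeasurable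
  refine ⟨inferInstance, ext_of_forall_integral_eq_of_IsFiniteMeasure fun φ => ?_⟩
  rw [integral_map hT.aemeasurable φ.continuous.aestronglyMeasurable]
  exact h φ φ.continuous

end InvariantProbs

section Compact

variable {X : Type*} [MetricSpace X] [CompactSpace X]

theorem tendsto_birkhoffAverage_apply_sub_of_tendsto {ι : Type*} {l : Filter ι} (T : X → X)
    {φ : X → ℝ} (hφ : Continuous φ) (x : ι → X) {ℓ : ι → ℕ} (hℓ : Tendsto ℓ l atTop) :
    Tendsto (fun k => birkhoffAverage ℝ T φ (ℓ k) (T (x k)) - birkhoffAverage ℝ T φ (ℓ k) (x k)) l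
      (𝓝 0) := by
  obtain ⟨B, hB⟩ := Metric.isBounded_iff.1 (isCompact_range hφ).isBounded
  refine squeeze_zero_norm (fun k => ?_)
    ((tendsto_const_div_atTop_nhds_zero_nat B).comp hℓ)
  rw [← dist_eq_norm, dist_birkhoffAverage_apply_birkhoffAverage]
  exact div_le_div_of_nonneg_right (hB (mem_range_self _) (mem_range_self _)) (Nat.cast_nonneg _)

variable [MeasurableSpace X] [BorelSpace X] {T : X → X} {φ : X → ℝ}

theorem integrable_of_continuous (hφ : Continuous φ) (μ : Measure X) [IsFiniteMeasure μ] :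
    Integrable φ μ :=
  hφ.integrable_of_hasCompactSupport (HasCompactSupport.of_compactSpace φ)

/-- The Krylov–Bogolyubov construction, for starting points that may vary with the length of the
segment. -/
theorem exists_mem_invariantProbs_tendsto_birkhoffAverage (hT : Continuous T) {ι : Type*}
    {l : Filter ι} [l.NeBot] (x : ι → X) {ℓ : ι → ℕ} (hℓ : Tendsto ℓ l atTop)
    (hℓ₀ : ∀ k, ℓ k ≠ 0) :
    ∃ μ ∈ invariantProbs T, ∃ U : Ultrafilter ι, ↑U ≤ l ∧ ∀ φ : X → ℝ, Continuous φ →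
      Tendsto (fun k => birkhoffAverage ℝ T φ (ℓ k) (x k)) U (𝓝 (∫ y, φ y ∂μ)) := by
  let ν (k : ι) : ProbabilityMeasure X :=
    ⟨empiricalMeasure T (ℓ k) (x k), isProbabilityMeasure_empiricalMeasure T (hℓ₀ k) (x k)⟩
  obtain ⟨μ, -, hμ⟩ := isCompact_univ.ultrafilter_le_nhds ((Ultrafilter.of l).map ν) (by simp)
  have hlim (φ : X → ℝ) (hφ : Continuous φ) :
      Tendsto (fun k => birkhoffAverage ℝ T φ (ℓ k) (x k)) (Ultrafilter.of l)
        (𝓝 (∫ y, φ y ∂(μ : Measure X))) :=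
    (ProbabilityMeasure.tendsto_iff_forall_integral_tendsto.1 hμ
      (BoundedContinuousFunction.mkOfCompact ⟨φ, hφ⟩)).congr fun k =>
        integral_empiricalMeasure T (ℓ k) (x k) φ
  refine ⟨μ, mem_invariantProbs_of_integral_comp hT fun φ hφ => ?_, Ultrafilter.of l,
    Ultrafilter.of_le l, hlim⟩
  have hshift := (hlim φ hφ).add <|
    tendsto_birkhoffAverage_apply_sub_of_tendsto T hφ x (hℓ.mono_left (Ultrafilter.of_le l))
  rw [add_zero] at hshift
  refine tendsto_nhds_unique (hlim _ (hφ.comp hT)) (hshift.congr fun k => ?_)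
  rw [add_sub_cancel]
  simp only [birkhoffAverage, birkhoffSum, ← Function.iterate_succ_apply,
    ← Function.iterate_succ_apply']

theorem invariantProbs_nonempty [Nonempty X] (hT : Continuous T) : (invariantProbs T).Nonempty := by
  inhabit X
  obtain ⟨μ, hμ, -⟩ := exists_mem_invariantProbs_tendsto_birkhoffAverage hT (fun _ => default)
    (tendsto_add_atTop_nat 1) Nat.succ_ne_zero
  exact ⟨μ, hμ⟩

theorem exists_mem_invariantProbs_measure_compl_eq_zero (hT : Continuous T) {A : Set X}
    (hA : IsClosed A) (hne : A.Nonempty) (hTA : MapsTo T A A) :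
    ∃ μ ∈ invariantProbs T, μ Aᶜ = 0 := by
  have := hne.to_subtype
  have := isCompact_iff_compactSpace.1 hA.isCompact
  have hTA' : Continuous (hTA.restrict T A A) := hT.restrict hTA
  obtain ⟨ν, hν, hνT⟩ := invariantProbs_nonempty hTA'
  have hval : Measurable (Subtype.val : A → X) := measurable_subtype_coe
  refine ⟨ν.map Subtype.val, ⟨Measure.isProbabilityMeasure_map hval.aemeasurable, ?_⟩, ?_⟩
  · conv_rhs => rw [← hνT, Measure.map_map hval hTA'.measurable]
    exact Measure.map_map hT.measurable hval
  · simp [Measure.map_apply hval hA.measurableSet.compl]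

theorem integral_birkhoffSum (hφ : Continuous φ) (hT : Continuous T) {μ : Measure X}
    (hμ : μ ∈ invariantProbs T) (n : ℕ) : ∫ x, birkhoffSum T φ n x ∂μ = n * ∫ x, φ x ∂μ := by
  have := hμ.1
  induction n with
  | zero => simp
  | succ n ih =>
    simp only [birkhoffSum_succ']
    rw [integral_add (g := fun x => birkhoffSum T φ n (T x)) (integrable_of_continuous hφ μ)
      (integrable_of_continuous ((continuous_birkhoffSum hφ hT n).comp hT) μ),
      integral_comp_of_mem_invariantProbs (continuous_birkhoffSum hφ hT n) hT hμ, ih]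
    push_cast
    ring

end Compact

theorem isLUB_beta {f : Circle1 → ℝ} {T : Circle1 → Circle1} (hf : Continuous f)
    (hT : Continuous T) : IsLUB ((fun μ => ∫ x, f x ∂μ) '' invariantProbs T) (beta f T) := by
  refine isLUB_csSup ((invariantProbs_nonempty hT).image _) ?_
  obtain ⟨B, hB⟩ := (isCompact_range hf).bddAbove
  refine ⟨B, forall_mem_image.2 fun μ hμ => ?_⟩
  have := hμ.1
  calc ∫ x, f x ∂μ ≤ ∫ _, B ∂μ :=
        integral_mono (integrable_of_continuous hf μ) (integrable_const B)
          fun x => hB (mem_range_self x)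
    _ = B := by simp

theorem isLUB_integral_sub_beta {f : Circle1 → ℝ} {T : Circle1 → Circle1} (hf : Continuous f)
    (hT : Continuous T) :
    IsLUB ((fun μ => ∫ x, (f x - beta f T) ∂μ) '' invariantProbs T) 0 := by
  have hsub (μ) (hμ : μ ∈ invariantProbs T) :
      ∫ x, (f x - beta f T) ∂μ = ∫ x, f x ∂μ - beta f T := by
    have := hμ.1
    simp [integral_sub (integrable_of_continuous hf μ) (integrable_const _)]
  refine ⟨forall_mem_image.2 fun μ hμ => ?_, fun b hb => ?_⟩
  · rw [hsub μ hμ]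
    exact sub_nonpos.2 ((isLUB_beta hf hT).1 ⟨μ, hμ, rfl⟩)
  · suffices beta f T ≤ b + beta f T from nonneg_of_le_add_left this
    refine (isLUB_beta hf hT).2 (forall_mem_image.2 fun μ hμ => ?_)
    rw [← sub_le_iff_le_add, ← hsub μ hμ]
    exact hb ⟨μ, hμ, rfl⟩

/-! ### Existence of a Lipschitz calibrated sub-action -/

theorem lipschitzWith_limsup {ι X : Type*} [PseudoMetricSpace X] {l : Filter ι} [l.NeBot]
    {C : NNReal} {v : ι → X → ℝ} (hv : ∀ i, LipschitzWith C (v i))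
    (hle : ∀ x, IsBoundedUnder (· ≤ ·) l fun i => v i x)
    (hge : ∀ x, IsBoundedUnder (· ≥ ·) l fun i => v i x) :
    LipschitzWith C fun x => limsup (fun i => v i x) l := by
  refine .of_le_add_mul C fun x y => ?_
  rw [← limsup_add_const l _ _ (hle y) (hge y).isCoboundedUnder_le]
  exact limsup_le_limsup (.of_forall fun i => (hv i).le_add_mul x y) (hge x).isCoboundedUnder_le
    (isBoundedUnder_le_add (hle y) isBoundedUnder_const)

section LimsupRecursion

variable {X : Type*} {T : X → X} {φ : X → ℝ} {v : ℕ → X → ℝ}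

theorem limsup_add_le_limsup_of_recursion
    (hle : ∀ x, IsBoundedUnder (· ≤ ·) atTop fun n => v n x)
    (hge : ∀ x, IsBoundedUnder (· ≥ ·) atTop fun n => v n x)
    (hrec : ∀ n x, v n x + φ x ≤ v (n + 1) (T x)) (x : X) :
    limsup (fun n => v n x) atTop + φ x ≤ limsup (fun n => v n (T x)) atTop := by
  rw [← limsup_add_const atTop _ _ (hle x) (hge x).isCoboundedUnder_le,
    ← limsup_nat_add (fun n => v n (T x)) 1]
  exact limsup_le_limsup (.of_forall fun n => hrec n x)
    (isBoundedUnder_ge_add (hge x) isBoundedUnder_const).isCoboundedUnder_le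
    ((tendsto_add_atTop_nat 1).isBoundedUnder_comp (hle (T x)))

theorem exists_limsup_le_of_recursion [MetricSpace X] [CompactSpace X] {C : NNReal}
    (hT : Continuous T) (hφ : Continuous φ) (hv : ∀ n, LipschitzWith C (v n))
    (hle : ∀ x, IsBoundedUnder (· ≤ ·) atTop fun n => v n x)
    (hge : ∀ x, IsBoundedUnder (· ≥ ·) atTop fun n => v n x)
    (hrec : ∀ n x, ∃ y, T y = x ∧ v (n + 1) x ≤ v n y + φ y) (x : X) :
    ∃ y, T y = x ∧ limsup (fun n => v n x) atTop ≤ limsup (fun n => v n y) atTop + φ y := by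
  choose y hTy hy using fun n => hrec n x
  obtain ⟨U, hU, hlim⟩ : ∃ U : Ultrafilter ℕ, ↑U ≤ (atTop : Filter ℕ) ∧
      Tendsto (fun n => v (n + 1) x) U (𝓝 (limsup (fun n => v n x) atTop)) := by
    rw [← mapClusterPt_iff_ultrafilter, ← limsup_nat_add _ 1]
    exact MapClusterPt.limsup
      ((tendsto_add_atTop_nat 1).isBoundedUnder_comp (hge x)).isCoboundedUnder_le
      ((tendsto_add_atTop_nat 1).isBoundedUnder_comp (hle x))
  obtain ⟨z, -, hyz : Tendsto y U (𝓝 z)⟩ :=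
    isCompact_univ.ultrafilter_le_nhds (U.map y) (by simp)
  refine ⟨z, tendsto_nhds_unique ((hT.tendsto z).comp hyz)
    (tendsto_const_nhds.congr fun n => (hTy n).symm), sub_le_iff_le_add.1 ?_⟩
  have hlow : Tendsto (fun n => v (n + 1) x - φ (y n) - C * dist (y n) z) U
      (𝓝 (limsup (fun n => v n x) atTop - φ z)) := by
    simpa using (hlim.sub ((hφ.tendsto z).comp hyz)).sub
      ((tendsto_iff_dist_tendsto_zero.1 hyz).const_mul (C : ℝ))
  refine le_of_forall_lt_imp_le_of_dense fun c hc => ?_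
  have hev : ∀ᶠ n in (U : Filter ℕ), c ≤ v n z := by
    filter_upwards [hlow.eventually_const_lt hc] with n hn
    linarith [hy n, (hv n).le_add_mul (y n) z]
  exact le_limsup_of_frequently_le (hev.frequently.filter_mono hU) (hle z)

end LimsupRecursion

/-- The largest Birkhoff sum of `φ` over the orbit segments of length `n` ending at `x`. It is
meaningful when `T` is surjective and these sums are bounded above. -/
noncomputable def maxSum {X : Type*} (T : X → X) (φ : X → ℝ) (n : ℕ) (x : X) : ℝ :=
  sSup (birkhoffSum T φ n '' (T^[n] ⁻¹' {x}))

theorem BackwardShadowing.surjective {X : Type*} [PseudoMetricSpace X] {T : X → X} {φ : X → ℝ}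
    {C : NNReal} (hP : BackwardShadowing T φ C) : Function.Surjective T := fun x =>
  let ⟨z, hz, _⟩ := hP 1 x x
  ⟨z, hz⟩

section MaxSum

variable {X : Type*} [TopologicalSpace X] [CompactSpace X] [T1Space X] {T : X → X} {φ : X → ℝ}

theorem isCompact_image_birkhoffSum_fiber (hφ : Continuous φ) (hT : Continuous T) (n : ℕ) (x : X) :
    IsCompact (birkhoffSum T φ n '' (T^[n] ⁻¹' {x})) :=
  (isClosed_singleton.preimage (hT.iterate n)).isCompact.image (continuous_birkhoffSum hφ hT n)

theorem birkhoffSum_le_maxSum (hφ : Continuous φ) (hT : Continuous T) (n : ℕ) (y : X) :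
    birkhoffSum T φ n y ≤ maxSum T φ n (T^[n] y) :=
  le_csSup (isCompact_image_birkhoffSum_fiber hφ hT n _).bddAbove ⟨y, rfl, rfl⟩

theorem exists_birkhoffSum_eq_maxSum (hφ : Continuous φ) (hT : Continuous T)
    (hsurj : Function.Surjective T) (n : ℕ) (x : X) :
    ∃ y, T^[n] y = x ∧ birkhoffSum T φ n y = maxSum T φ n x :=
  (isCompact_image_birkhoffSum_fiber hφ hT n x).sSup_mem
    (((singleton_nonempty x).preimage (hsurj.iterate n)).image _)

theorem maxSum_add_le_maxSum_succ (hφ : Continuous φ) (hT : Continuous T)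
    (hsurj : Function.Surjective T) (n : ℕ) (y : X) :
    maxSum T φ n y + φ y ≤ maxSum T φ (n + 1) (T y) := by
  obtain ⟨z, rfl, hz⟩ := exists_birkhoffSum_eq_maxSum hφ hT hsurj n y
  rw [← hz, ← birkhoffSum_succ, ← Function.iterate_succ_apply' T]
  exact birkhoffSum_le_maxSum hφ hT (n + 1) z

theorem exists_maxSum_succ_le (hφ : Continuous φ) (hT : Continuous T)
    (hsurj : Function.Surjective T) (n : ℕ) (x : X) :
    ∃ y, T y = x ∧ maxSum T φ (n + 1) x ≤ maxSum T φ n y + φ y := by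
  obtain ⟨z, hz, hz'⟩ := exists_birkhoffSum_eq_maxSum hφ hT hsurj (n + 1) x
  refine ⟨T^[n] z, by rw [← Function.iterate_succ_apply' T, hz], ?_⟩
  rw [← hz', birkhoffSum_succ]
  gcongr
  exact birkhoffSum_le_maxSum hφ hT n z

end MaxSum

section CompactMetric

variable {X : Type*} [MetricSpace X] [CompactSpace X] {T : X → X} {φ : X → ℝ} {C : NNReal}

theorem lipschitzWith_maxSum (hφ : Continuous φ) (hT : Continuous T)
    (hP : BackwardShadowing T φ C) (n : ℕ) : LipschitzWith C (maxSum T φ n) := by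
  refine .of_le_add_mul C fun x x' => ?_
  obtain ⟨y, rfl, hy⟩ := exists_birkhoffSum_eq_maxSum hφ hT hP.surjective n x
  obtain ⟨z, rfl, -, hz⟩ := hP n y x'
  rw [dist_comm] at hz
  linarith [(abs_le.1 hz).1, birkhoffSum_le_maxSum hφ hT n z]

theorem BackwardShadowing.exists_mul_le_birkhoffSum (hP : BackwardShadowing T φ C) (n : ℕ) (y : X)
    (k : ℕ) (x : X) : ∃ z, T^[n * k] z = x ∧
      k * (birkhoffSum T φ n y - C * Metric.diam (univ : Set X)) ≤ birkhoffSum T φ (n * k) z := by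
  induction k generalizing x with
  | zero => exact ⟨x, by simp⟩
  | succ k ih =>
    obtain ⟨w, hw, -, hwy⟩ := hP n y x
    obtain ⟨z, hz, hzw⟩ := ih w
    refine ⟨z, by rw [Nat.mul_succ, add_comm, Function.iterate_add_apply, hz, hw], ?_⟩
    have hdiam : C * dist x (T^[n] y) ≤ C * Metric.diam (univ : Set X) := by
      gcongr
      exact Metric.dist_le_diam_of_mem isCompact_univ.isBounded (mem_univ _) (mem_univ _)
    rw [Nat.mul_succ, birkhoffSum_add, hz]
    push_cast
    linarith [(abs_le.1 hwy).1]

variable [MeasurableSpace X] [BorelSpace X]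

/-- A segment with a larger sum could be repeated, at a cost of `C * diam X` per junction, to build
an invariant measure with positive integral. -/
theorem BackwardShadowing.birkhoffSum_le (hφ : Continuous φ) (hT : Continuous T)
    (hP : BackwardShadowing T φ C) (hβ : ∀ μ ∈ invariantProbs T, ∫ x, φ x ∂μ ≤ 0) (n : ℕ) (y : X) :
    birkhoffSum T φ n y ≤ C * Metric.diam (univ : Set X) := by
  rcases n.eq_zero_or_pos with rfl | hn
  · rw [birkhoffSum_zero]
    positivity
  have hn' : (0 : ℝ) < n := Nat.cast_pos.2 hn
  choose z _ hz using fun k => hP.exists_mul_le_birkhoffSum n y (k + 1) y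
  have hℓ : Tendsto (fun k => n * (k + 1)) atTop atTop :=
    (tendsto_add_atTop_nat 1).const_mul_atTop' hn
  obtain ⟨μ, hμ, U, -, hlim⟩ :=
    exists_mem_invariantProbs_tendsto_birkhoffAverage hT z hℓ fun k => by positivity
  suffices (birkhoffSum T φ n y - C * Metric.diam (univ : Set X)) / n ≤ 0 by
    rwa [div_le_iff₀ hn', zero_mul, sub_nonpos] at this
  refine (ge_of_tendsto' (hlim φ hφ) fun k => ?_).trans (hβ μ hμ)
  rw [birkhoffAverage, smul_eq_mul, ← div_eq_inv_mul, div_le_div_iff₀ hn' (by positivity)]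
  calc _ = n * (↑(k + 1) * (birkhoffSum T φ n y - C * Metric.diam (univ : Set X))) := by
        push_cast
        ring
    _ ≤ n * birkhoffSum T φ (n * (k + 1)) (z k) := by gcongr; exact hz k
    _ = _ := mul_comm _ _

theorem exists_birkhoffSum_nonneg [Nonempty X] (hφ : Continuous φ) (hT : Continuous T)
    (hβ : IsLUB ((fun μ => ∫ x, φ x ∂μ) '' invariantProbs T) 0) (n : ℕ) :
    ∃ y, 0 ≤ birkhoffSum T φ n y := by
  rcases n.eq_zero_or_pos with rfl | hn
  · simp
  have hn' : (0 : ℝ) < n := Nat.cast_pos.2 hn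
  obtain ⟨y, -, hy⟩ := isCompact_univ.exists_isMaxOn univ_nonempty
    (continuous_birkhoffSum hφ hT n).continuousOn
  suffices 0 ≤ birkhoffSum T φ n y / n from ⟨y, by simpa using (le_div_iff₀ hn').1 this⟩
  refine hβ.2 (forall_mem_image.2 fun μ hμ => ?_)
  have := hμ.1
  rw [le_div_iff₀' hn', ← integral_birkhoffSum hφ hT hμ]
  calc ∫ x, birkhoffSum T φ n x ∂μ ≤ ∫ _, birkhoffSum T φ n y ∂μ :=
        integral_mono (integrable_of_continuous (continuous_birkhoffSum hφ hT n) μ)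
          (integrable_const _) fun x => hy (mem_univ x)
    _ = birkhoffSum T φ n y := by simp

theorem abs_maxSum_le [Nonempty X] (hφ : Continuous φ) (hT : Continuous T)
    (hP : BackwardShadowing T φ C) (hβ : IsLUB ((fun μ => ∫ x, φ x ∂μ) '' invariantProbs T) 0)
    (n : ℕ) (x : X) : |maxSum T φ n x| ≤ C * Metric.diam (univ : Set X) := by
  refine abs_le.2 ⟨?_, ?_⟩
  · obtain ⟨y, hy⟩ := exists_birkhoffSum_nonneg hφ hT hβ n
    have hdiam : C * dist (T^[n] y) x ≤ C * Metric.diam (univ : Set X) := by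
      gcongr
      exact Metric.dist_le_diam_of_mem isCompact_univ.isBounded (mem_univ _) (mem_univ _)
    linarith [birkhoffSum_le_maxSum hφ hT n y,
      (lipschitzWith_maxSum hφ hT hP n).le_add_mul (T^[n] y) x]
  · obtain ⟨y, -, hy⟩ := exists_birkhoffSum_eq_maxSum hφ hT hP.surjective n x
    exact hy ▸ hP.birkhoffSum_le hφ hT (forall_mem_image.1 hβ.1) n y

theorem BackwardShadowing.exists_calibrated_subaction [Nonempty X] (hφ : Continuous φ)
    (hT : Continuous T) (hP : BackwardShadowing T φ C)
    (hβ : IsLUB ((fun μ => ∫ x, φ x ∂μ) '' invariantProbs T) 0) :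
    ∃ g : X → ℝ, LipschitzWith C g ∧ (∀ x, g x + φ x ≤ g (T x)) ∧
      ∀ x, ∃ y, T y = x ∧ g y + φ y = g x := by
  have hbound := abs_maxSum_le hφ hT hP hβ
  have hle (x) : IsBoundedUnder (· ≤ ·) atTop fun n => maxSum T φ n x :=
    isBoundedUnder_of ⟨_, fun n => (abs_le.1 (hbound n x)).2⟩
  have hge (x) : IsBoundedUnder (· ≥ ·) atTop fun n => maxSum T φ n x :=
    isBoundedUnder_of ⟨_, fun n => (abs_le.1 (hbound n x)).1⟩
  have hsub := limsup_add_le_limsup_of_recursion hle hge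
    (maxSum_add_le_maxSum_succ hφ hT hP.surjective)
  refine ⟨fun x => limsup (fun n => maxSum T φ n x) atTop,
    lipschitzWith_limsup (lipschitzWith_maxSum hφ hT hP) hle hge, hsub, fun x => ?_⟩
  obtain ⟨y, rfl, hy⟩ := exists_limsup_le_of_recursion hT hφ (lipschitzWith_maxSum hφ hT hP)
    hle hge (exists_maxSum_succ_le hφ hT hP.surjective) x
  exact ⟨y, rfl, (hsub y).antisymm hy⟩

end CompactMetric

theorem Gset_nonempty {f : Circle1 → ℝ} {T : Circle1 → Circle1} (hf : Continuous f)
    (hT : Continuous T) {C : NNReal} (hP : BackwardShadowing T f C) : (Gset f T).Nonempty := by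
  obtain ⟨g, hg, hsub, hcal⟩ := (hP.sub_const (beta f T)).exists_calibrated_subaction
    (φ := fun x => f x - beta f T) (hf.sub continuous_const) hT (isLUB_integral_sub_beta hf hT)
  simp only [← add_sub_assoc, sub_le_iff_le_add, sub_eq_iff_eq_add] at hsub hcal
  exact ⟨g, ⟨C, hg⟩, ⟨hg.continuous, hsub⟩, hcal⟩

/-! ### The non-wandering set -/

/-- The non-wandering set of a system with a normalised potential `φ`; on the circle `Ω(f,T)` is
`nonwanderingSet T (f - β(f,T))`. -/
def nonwanderingSet {X : Type*} [PseudoMetricSpace X] (T : X → X) (φ : X → ℝ) : Set X :=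
  {x | ∀ ε > (0 : ℝ), ∃ n : ℕ, 1 ≤ n ∧ ∃ z, T^[n] z = x ∧ dist z x < ε ∧ |birkhoffSum T φ n z| < ε}

/-- The points along whose forward orbit the inequality `g + φ ≤ g ∘ T` of a sub-action `g` is an
equality; on the circle `Λ*_{f,T,g}` is `tightSet T (f - β(f,T)) g`. -/
def tightSet {X : Type*} (T : X → X) (φ g : X → ℝ) : Set X :=
  {x | ∀ n : ℕ, g (T^[n] x) + φ (T^[n] x) = g (T (T^[n] x))}

theorem OmegaSet_eq_nonwanderingSet (f : Circle1 → ℝ) (T : Circle1 → Circle1) :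
    OmegaSet f T = nonwanderingSet T fun y => f y - beta f T :=
  rfl

theorem LambdaStar_eq_tightSet (f : Circle1 → ℝ) (T : Circle1 → Circle1) (g : Circle1 → ℝ) :
    LambdaStar f T g = tightSet T (fun y => f y - beta f T) g := by
  simp only [LambdaStar, Eset, tightSet, mem_ofPred_eq, ← add_sub_assoc, sub_eq_iff_eq_add]

theorem birkhoffSum_mul_of_isPeriodicPt {X M : Type*} [AddCommMonoid M] {T : X → X} (φ : X → M)
    {m : ℕ} {x : X} (hx : Function.IsPeriodicPt T m x) (k : ℕ) :
    birkhoffSum T φ (m * k) x = k • birkhoffSum T φ m x := by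
  induction k with
  | zero => simp
  | succ k ih => rw [Nat.mul_succ, birkhoffSum_add, hx.mul_const k, ih, succ_nsmul]

section Returns

variable {X : Type*} [PseudoMetricSpace X] {T : X → X} {φ : X → ℝ} {x : X}

theorem exists_seq_of_mem_nonwanderingSet (hx : x ∈ nonwanderingSet T φ) :
    ∃ (n : ℕ → ℕ) (z : ℕ → X), (∀ k, n k ≠ 0) ∧ (∀ k, T^[n k] (z k) = x) ∧
      Tendsto z atTop (𝓝 x) ∧ Tendsto (fun k => birkhoffSum T φ (n k) (z k)) atTop (𝓝 0) := by
  choose n hn z hz hzx hS using fun k : ℕ => hx (1 / ((k : ℝ) + 1)) Nat.one_div_pos_of_nat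
  have h0 : Tendsto (fun k : ℕ => 1 / ((k : ℝ) + 1)) atTop (𝓝 0) :=
    tendsto_one_div_add_atTop_nhds_zero_nat
  exact ⟨n, z, fun k => Nat.one_le_iff_ne_zero.1 (hn k), hz,
    tendsto_iff_dist_tendsto_zero.2 (squeeze_zero (fun _ => dist_nonneg) (fun k => (hzx k).le) h0),
    squeeze_zero_norm (fun k => (hS k).le) h0⟩

end Returns

section LimitSegments

variable {X : Type*} [TopologicalSpace X] {T : X → X} {φ : X → ℝ} {ι : Type*}
  {l : Filter ι} {n : ι → ℕ} {z : ι → X} {x : X}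

theorem isPeriodicPt_and_birkhoffSum_eq_zero_of_frequently_eq [T2Space X]
    (hφ : Continuous φ) (hT : Continuous T) (hret : ∀ k, T^[n k] (z k) = x) (hz : Tendsto z l (𝓝 x))
    (hS : Tendsto (fun k => birkhoffSum T φ (n k) (z k)) l (𝓝 0)) {m : ℕ}
    (hm : ∃ᶠ k in l, n k = m) : Function.IsPeriodicPt T m x ∧ birkhoffSum T φ m x = 0 := by
  constructor
  · refine isClosed_singleton.mem_of_frequently_of_tendsto (hm.mono fun k hk => ?_)
      (((hT.iterate m).tendsto x).comp hz)
    exact hk ▸ hret k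
  · have hlim := (((continuous_birkhoffSum hφ hT m).tendsto x).comp hz).sub hS
    rw [sub_zero] at hlim
    refine isClosed_singleton.mem_of_frequently_of_tendsto (hm.mono fun k hk => ?_) hlim
    rw [hk]
    exact sub_self _

theorem eq_zero_of_tendsto_iterate [l.NeBot] {h : X → ℝ} (hh : Continuous h) (h₀ : ∀ y, 0 ≤ h y)
    (hS : Tendsto (fun k => birkhoffSum T h (n k) (z k)) l (𝓝 0)) {i : ι → ℕ}
    (hi : ∀ᶠ k in l, i k < n k) {w : X} (hw : Tendsto (fun k => T^[i k] (z k)) l (𝓝 w)) :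
    h w = 0 := by
  refine le_antisymm (le_of_tendsto_of_tendsto ((hh.tendsto w).comp hw) hS ?_) (h₀ w)
  filter_upwards [hi] with k hk
  exact Finset.single_le_sum (f := fun i => h (T^[i] (z k))) (fun _ _ => h₀ _)
    (Finset.mem_range.2 hk)

theorem exists_iterate_eq_and_forall_eq_zero [T2Space X] [CompactSpace X] [l.NeBot]
    (hT : Continuous T)
    {h : X → ℝ} (hh : Continuous h) (h₀ : ∀ y, 0 ≤ h y) (hn : Tendsto n l atTop)
    (hret : ∀ k, T^[n k] (z k) = x) (hz : Tendsto z l (𝓝 x))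
    (hS : Tendsto (fun k => birkhoffSum T h (n k) (z k)) l (𝓝 0)) (m : ℕ) :
    ∃ y, T^[m] y = x ∧ ∀ i, h (T^[i] y) = 0 := by
  have hU := Ultrafilter.of_le l
  obtain ⟨y, -, hy : Tendsto (fun k => T^[n k - m] (z k)) (Ultrafilter.of l) (𝓝 y)⟩ :=
    isCompact_univ.ultrafilter_le_nhds ((Ultrafilter.of l).map fun k => T^[n k - m] (z k))
      (by simp)
  have hiter (i) : Tendsto (fun k => T^[i + (n k - m)] (z k)) (Ultrafilter.of l) (𝓝 (T^[i] y)) := by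
    simpa only [Function.iterate_add_apply, Function.comp_def] using
      ((hT.iterate i).tendsto y).comp hy
  have hym : T^[m] y = x := by
    refine tendsto_nhds_unique (hiter m) (tendsto_const_nhds.congr' ?_)
    filter_upwards [hU (hn.eventually_ge_atTop m)] with k hk
    rw [Nat.add_sub_of_le hk, hret]
  refine ⟨y, hym, fun i => ?_⟩
  rcases lt_or_ge i m with him | hmi
  · refine eq_zero_of_tendsto_iterate hh h₀ (hS.mono_left hU) ?_ (hiter i)
    filter_upwards [hU (hn.eventually_ge_atTop m)] with k hk
    omega
  · obtain ⟨j, rfl⟩ := Nat.exists_eq_add_of_le' hmi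
    rw [Function.iterate_add_apply, hym]
    exact eq_zero_of_tendsto_iterate hh h₀ hS (hn.eventually_gt_atTop j)
      (((hT.iterate j).tendsto x).comp hz)

end LimitSegments

section Nonwandering

variable {X : Type*} [MetricSpace X] {T : X → X} {φ : X → ℝ} {x : X}

/-- If the return times stay bounded along a subsequence, then `x` is periodic with vanishing
Birkhoff sum over a period, and the multiples of its period serve as return times. -/
theorem exists_tendsto_atTop_of_mem_nonwanderingSet (hφ : Continuous φ) (hT : Continuous T)
    (hx : x ∈ nonwanderingSet T φ) :
    ∃ (n : ℕ → ℕ) (z : ℕ → X), Tendsto n atTop atTop ∧ (∀ k, T^[n k] (z k) = x) ∧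
      Tendsto z atTop (𝓝 x) ∧ Tendsto (fun k => birkhoffSum T φ (n k) (z k)) atTop (𝓝 0) := by
  obtain ⟨n, z, hn, hret, hz, hS⟩ := exists_seq_of_mem_nonwanderingSet hx
  by_cases hm : ∃ m, ∃ᶠ k in atTop, n k = m
  · obtain ⟨m, hm⟩ := hm
    obtain ⟨hper, hzero⟩ :=
      isPeriodicPt_and_birkhoffSum_eq_zero_of_frequently_eq hφ hT hret hz hS hm
    obtain ⟨k₀, rfl⟩ := hm.exists
    exact ⟨fun k => n k₀ * k, fun _ => x, tendsto_id.const_mul_atTop' (Nat.pos_of_ne_zero (hn k₀)),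
      hper.mul_const, tendsto_const_nhds, by
      simp [birkhoffSum_mul_of_isPeriodicPt φ hper, hzero]⟩
  · have hn : Tendsto n atTop cofinite :=
      le_cofinite_iff_eventually_ne.2 fun m => not_frequently.1 fun hfr => hm ⟨m, hfr⟩
    exact ⟨n, z, hn.mono_right Nat.cofinite_eq_atTop.le, hret, hz, hS⟩

/-- Along the segments witnessing that `x` is non-wandering the non-negative defects `g ∘ T - g - φ`
sum to almost zero, so they vanish along the limits of these segments. -/
theorem nonwanderingSet_subset_iInter_image_tightSet [CompactSpace X] (hφ : Continuous φ)
    (hT : Continuous T) {g : X → ℝ} (hg : Continuous g) (hsub : ∀ y, g y + φ y ≤ g (T y)) :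
    nonwanderingSet T φ ⊆ ⋂ m : ℕ, T^[m] '' tightSet T φ g := by
  refine fun x hx => mem_iInter.2 fun m => ?_
  obtain ⟨n, z, hn, hret, hz, hS⟩ := exists_tendsto_atTop_of_mem_nonwanderingSet hφ hT hx
  have hdefect : Tendsto (fun k => birkhoffSum T (fun y => g (T y) - g y - φ y) (n k) (z k)) atTop
      (𝓝 0) := by
    have hlim := ((tendsto_const_nhds (x := g x)).sub ((hg.tendsto x).comp hz)).sub hS
    rw [sub_self, sub_zero] at hlim
    refine hlim.congr fun k => ?_
    rw [← hret k, Function.comp_apply, ← birkhoffSum_comp_sub_self, ← birkhoffSum_sub]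
    rfl
  obtain ⟨y, hy, hzero⟩ := exists_iterate_eq_and_forall_eq_zero hT
    (h := fun y => g (T y) - g y - φ y) (((hg.comp hT).sub hg).sub hφ)
    (fun y => by linarith [hsub y]) hn hret hz hdefect m
  exact ⟨y, fun i => by linarith [hzero i], hy⟩

end Nonwandering

theorem OmegaSet_subset_Lambda {f g : Circle1 → ℝ} {T : Circle1 → Circle1} (hf : Continuous f)
    (hT : Continuous T) (hg : IsSubaction f T g) : OmegaSet f T ⊆ Lambda f T g := by
  simp only [Lambda, OmegaSet_eq_nonwanderingSet, LambdaStar_eq_tightSet]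
  exact nonwanderingSet_subset_iInter_image_tightSet (φ := fun y => f y - beta f T)
    (hf.sub continuous_const) hT hg.1
    fun y => by linarith [hg.2 y]

/-! ### Limit sets of forward and backward orbits -/

/-- The set of cluster points of a sequence. It is applied to backward orbits as well as to forward
orbits, so it does not refer to a map. -/
def limitSet {X : Type*} [TopologicalSpace X] (u : ℕ → X) : Set X :=
  {a | MapClusterPt a atTop u}

theorem iterate_eq_of_backward {X : Type*} {T : X → X} {u : ℕ → X}
    (hu : ∀ n, T (u (n + 1)) = u n) (n : ℕ) : T^[n] (u n) = u 0 := by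
  induction n with
  | zero => rfl
  | succ n ih => rw [Function.iterate_succ_apply, hu, ih]

section LimitSet

variable {X : Type*} [TopologicalSpace X] {T : X → X} {u : ℕ → X}

theorem isClosed_limitSet (u : ℕ → X) : IsClosed (limitSet u) :=
  isClosed_setOfPred_clusterPt

theorem limitSet_nonempty [CompactSpace X] (u : ℕ → X) : (limitSet u).Nonempty :=
  exists_clusterPt_of_compactSpace _

theorem limitSet_subset {A : Set X} (hA : IsClosed A) (hu : ∀ n, u n ∈ A) : limitSet u ⊆ A :=
  fun _ ha => hA.mem_of_mapClusterPt ha (.of_forall hu)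

theorem limitSet_comp_succ (u : ℕ → X) : limitSet (fun n => u (n + 1)) = limitSet u := by
  ext a
  change ClusterPt a (map (u ∘ (· + 1)) atTop) ↔ ClusterPt a (map u atTop)
  rw [← Filter.map_map, map_add_atTop_eq_nat]

theorem mapsTo_limitSet_comp (hT : Continuous T) (u : ℕ → X) :
    MapsTo T (limitSet u) (limitSet (T ∘ u)) :=
  fun _ ha => ha.continuousAt_comp hT.continuousAt

theorem mapsTo_limitSet_forward (hT : Continuous T) (x : X) :
    MapsTo T (limitSet fun n => T^[n] x) (limitSet fun n => T^[n] x) := by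
  have h := mapsTo_limitSet_comp hT fun n => T^[n] x
  simpa only [Function.comp_def, ← Function.iterate_succ_apply', Nat.succ_eq_add_one,
    limitSet_comp_succ fun n => T^[n] x] using h

theorem mapsTo_limitSet_backward (hT : Continuous T) (hu : ∀ n, T (u (n + 1)) = u n) :
    MapsTo T (limitSet u) (limitSet u) := by
  have h := mapsTo_limitSet_comp hT fun n => u (n + 1)
  simpa only [Function.comp_def, hu, limitSet_comp_succ u] using h

theorem exists_backward_orbit [T2Space X] [CompactSpace X] (hT : Continuous T) {L : Set X}
    (hL : IsClosed L) (hTL : MapsTo T L L) {x : X} (hx : x ∈ ⋂ n : ℕ, T^[n] '' L) :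
    ∃ u : ℕ → X, u 0 = x ∧ (∀ n, T (u (n + 1)) = u n) ∧ ∀ n, u n ∈ L := by
  choose y hyL hy using mem_iInter.1 hx
  let U := Ultrafilter.of (atTop : Filter ℕ)
  have hU : (U : Filter ℕ) ≤ atTop := Ultrafilter.of_le atTop
  have hlim (k : ℕ) : ∃ w, Tendsto (fun n => T^[n - k] (y n)) U (𝓝 w) := by
    obtain ⟨w, -, hw⟩ :=
      isCompact_univ.ultrafilter_le_nhds (U.map fun n => T^[n - k] (y n)) (by simp)
    exact ⟨w, hw⟩
  choose u hu using hlim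
  refine ⟨u, ?_, fun k => ?_, fun k => ?_⟩
  · exact tendsto_nhds_unique (hu 0) (tendsto_const_nhds.congr fun n => (hy n).symm)
  · refine tendsto_nhds_unique ((hT.tendsto _).comp (hu (k + 1))) ((hu k).congr' ?_)
    filter_upwards [hU (eventually_gt_atTop k)] with n hn
    rw [Function.comp_apply, ← Function.iterate_succ_apply' T, Nat.sub_succ', Nat.succ_eq_add_one,
      Nat.sub_add_cancel (Nat.sub_pos_of_lt hn)]
  · exact hL.mem_of_tendsto (hu k) (.of_forall fun n => hTL.iterate _ (hyL n))

end LimitSet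

section TightSet

variable {X : Type*} {T : X → X} {φ g : X → ℝ}

theorem mapsTo_tightSet : MapsTo T (tightSet T φ g) (tightSet T φ g) := fun _ hx n => by
  simpa only [Function.iterate_succ_apply] using hx (n + 1)

theorem isClosed_tightSet [TopologicalSpace X] (hφ : Continuous φ) (hT : Continuous T)
    (hg : Continuous g) : IsClosed (tightSet T φ g) := by
  simp only [tightSet, ofPred_forall]
  exact isClosed_iInter fun n =>
    (isClosed_eq (hg.add hφ) (hg.comp hT)).preimage (hT.iterate n)

theorem birkhoffSum_of_mem_tightSet {y : X} (hy : y ∈ tightSet T φ g) (n : ℕ) :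
    birkhoffSum T φ n y = g (T^[n] y) - g y := by
  rw [← birkhoffSum_comp_sub_self]
  exact Finset.sum_congr rfl fun i _ => eq_sub_of_add_eq' (hy i)

variable [PseudoMetricSpace X] {C K : NNReal}

theorem BackwardShadowing.exists_iterate_eq_of_mem_tightSet (hP : BackwardShadowing T φ C)
    (hg : LipschitzWith K g) {y : X} (hy : y ∈ tightSet T φ g) (n : ℕ) (w : X) :
    ∃ z, T^[n] z = w ∧ dist z y ≤ C * dist w (T^[n] y) ∧
      |birkhoffSum T φ n z - (g w - g y)| ≤ (C + K) * dist w (T^[n] y) := by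
  obtain ⟨z, hz, hzy, hS⟩ := hP n y w
  refine ⟨z, hz, hzy, ?_⟩
  have hgw := hg.dist_le_mul (T^[n] y) w
  rw [Real.dist_eq, dist_comm] at hgw
  rw [birkhoffSum_of_mem_tightSet hy] at hS
  rw [add_mul]
  calc |birkhoffSum T φ n z - (g w - g y)|
      = |birkhoffSum T φ n z - (g (T^[n] y) - g y) + (g (T^[n] y) - g w)| := by ring_nf
    _ ≤ _ := (abs_add_le _ _).trans (add_le_add hS hgw)

theorem limitSet_subset_nonwanderingSet (hP : BackwardShadowing T φ C) (hg : LipschitzWith K g)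
    {x : X} (hx : x ∈ tightSet T φ g) :
    limitSet (fun n => T^[n] x) ⊆ nonwanderingSet T φ := by
  intro a ha ε hε
  obtain ⟨δ, hδ, rfl⟩ : ∃ δ > 0, δ * (C + 2 * K + 1) = ε :=
    ⟨ε / (C + 2 * K + 1), by positivity, by field_simp⟩
  have hfreq := mapClusterPt_iff_frequently.1 ha _ (Metric.ball_mem_nhds a hδ)
  obtain ⟨n, -, hn : dist _ _ < δ⟩ := frequently_atTop.1 hfreq 0
  obtain ⟨m, hm, hma : dist _ _ < δ⟩ := frequently_atTop.1 hfreq (n + 1)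
  obtain ⟨p, rfl⟩ := Nat.exists_eq_add_of_le' (Nat.le_of_succ_le hm)
  rw [Function.iterate_add_apply, dist_comm] at hma
  obtain ⟨z, hz, hzy, hS⟩ :=
    hP.exists_iterate_eq_of_mem_tightSet hg (mapsTo_tightSet.iterate n hx) p a
  set y := T^[n] x
  have hCδ : C * dist a (T^[p] y) ≤ C * δ := by gcongr
  have hKδ : K * dist a (T^[p] y) ≤ K * δ := by gcongr
  have hgy : |g a - g y| ≤ K * δ := (hg.dist_le_mul a y).trans (by rw [dist_comm a]; gcongr)
  have hK : 0 ≤ K * δ := by positivity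
  refine ⟨p, by omega, z, hz, ?_, ?_⟩
  · linarith [dist_triangle z y a]
  · rw [← sub_add_cancel (birkhoffSum T φ p z) (g a - g y)]
    linarith [abs_add_le (birkhoffSum T φ p z - (g a - g y)) (g a - g y)]

/-- The backward orbit leads from a point near `a` to `x`, and shadowing closes the gap between this
point and the forward orbit of `x`. -/
theorem mem_nonwanderingSet_of_mem_limitSet (hP : BackwardShadowing T φ C) (hg : LipschitzWith K g)
    {u : ℕ → X} (hu : ∀ n, T (u (n + 1)) = u n) (hut : ∀ n, u n ∈ tightSet T φ g) {a : X}
    (hfor : a ∈ limitSet fun n => T^[n] (u 0)) (hback : a ∈ limitSet u) :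
    u 0 ∈ nonwanderingSet T φ := by
  intro ε hε
  obtain ⟨δ, hδ, rfl⟩ : ∃ δ > 0, (C + K + 1) * (2 * δ) = ε :=
    ⟨ε / (2 * (C + K + 1)), by positivity, by field_simp⟩
  have hball := Metric.ball_mem_nhds a hδ
  obtain ⟨k, hk, hka : dist _ _ < δ⟩ :=
    frequently_atTop.1 (mapClusterPt_iff_frequently.1 hfor _ hball) 1
  obtain ⟨m, hma : dist _ _ < δ⟩ := (mapClusterPt_iff_frequently.1 hback _ hball).exists
  obtain ⟨z, hz, hzx, hS⟩ := hP.exists_iterate_eq_of_mem_tightSet hg (hut 0) k (u m)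
  have hgap : dist (u m) (T^[k] (u 0)) ≤ 2 * δ := by
    linarith [dist_triangle_right (u m) (T^[k] (u 0)) a]
  have hCgap : C * dist (u m) (T^[k] (u 0)) ≤ C * (2 * δ) := by gcongr
  have hKgap : K * dist (u m) (T^[k] (u 0)) ≤ K * (2 * δ) := by gcongr
  have hK : 0 ≤ K * (2 * δ) := by positivity
  have hm := iterate_eq_of_backward hu m
  refine ⟨k + m, by omega, z, ?_, by linarith, ?_⟩
  · rw [add_comm, Function.iterate_add_apply, hz, hm]
  · rw [birkhoffSum_add, hz, birkhoffSum_of_mem_tightSet (hut m), hm, ← neg_sub (g (u m)),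
      ← sub_eq_add_neg]
    linarith

end TightSet

/-! ### Comparison of `K(f,T)` and `Ω(f,T)` -/

section Comparison

variable {f g : Circle1 → ℝ} {T : Circle1 → Circle1} {C K : NNReal} {A B : Set Circle1}

theorem exists_isMaximizing_measure_compl_eq_zero (hT : Continuous T) (hg : Continuous g)
    (hA : IsClosed A) (hne : A.Nonempty) (hTA : MapsTo T A A)
    (hAL : A ⊆ LambdaStar f T g) : ∃ μ, IsMaximizing f T μ ∧ μ Aᶜ = 0 := by
  obtain ⟨μ, hμ, hμA⟩ := exists_mem_invariantProbs_measure_compl_eq_zero hT hA hne hTA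
  have := hμ.1
  have hfg : f =ᵐ[μ] fun x => g (T x) - g x + beta f T := by
    filter_upwards [(measure_eq_zero_iff_ae_notMem (s := Aᶜ)).1 hμA] with x hx
    have hx0 : g x + f x = g (T x) + beta f T := hAL (not_notMem.1 hx) 0
    linarith
  refine ⟨μ, ⟨hμ, ?_⟩, hμA⟩
  have hgi := integrable_of_continuous hg μ
  have hgTi : Integrable (fun x => g (T x)) μ := integrable_of_continuous (hg.comp hT) μ
  calc ∫ x, f x ∂μ = ∫ x, (g (T x) - g x + beta f T) ∂μ := integral_congr_ae hfg
    _ = ∫ x, g (T x) ∂μ - ∫ x, g x ∂μ + beta f T := by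
      rw [integral_add (f := fun x => g (T x) - g x) (hgTi.sub hgi) (integrable_const _),
        integral_sub hgTi hgi, integral_const, probReal_univ, one_smul]
    _ = beta f T := by
      rw [integral_comp_of_mem_invariantProbs hg hT hμ, sub_self, zero_add]

theorem OmegaSet_subset_of_isMinimalSet (hT : Continuous T) (hP : BackwardShadowing T f C)
    (hmin : IsMinimalSet T (OmegaSet f T)) (hg : LipschitzWith K g) (hA : IsClosed A)
    (hne : A.Nonempty) (hTA : MapsTo T A A) (hAL : A ⊆ LambdaStar f T g) : OmegaSet f T ⊆ A := by
  obtain ⟨a, ha⟩ := hne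
  have hlimit : limitSet (fun n => T^[n] a) ⊆ OmegaSet f T := by
    rw [LambdaStar_eq_tightSet] at hAL
    exact limitSet_subset_nonwanderingSet (hP.sub_const _) hg (hAL ha)
  rw [← hmin.2.2.2 _ hlimit (limitSet_nonempty _) (isClosed_limitSet _).isCompact
    (mapsTo_limitSet_forward hT a).image_subset]
  exact limitSet_subset hA fun n => hTA.iterate n ha

theorem inter_nonempty_of_existsUnique_isMaximizing (hT : Continuous T)
    (huniq : ∃! μ, IsMaximizing f T μ) (hg : Continuous g) (hA : IsClosed A) (hAne : A.Nonempty)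
    (hTA : MapsTo T A A) (hAL : A ⊆ LambdaStar f T g) (hB : IsClosed B) (hBne : B.Nonempty)
    (hTB : MapsTo T B B) (hBL : B ⊆ LambdaStar f T g) : (A ∩ B).Nonempty := by
  obtain ⟨μ, hμ, hμA⟩ := exists_isMaximizing_measure_compl_eq_zero hT hg hA hAne hTA hAL
  obtain ⟨ν, hν, hνB⟩ := exists_isMaximizing_measure_compl_eq_zero hT hg hB hBne hTB hBL
  obtain rfl := huniq.unique hμ hν
  have := hμ.1.1
  refine nonempty_of_measure_ne_zero (μ := μ) ?_
  rw [(prob_compl_eq_zero_iff (hA.inter hB).measurableSet).1]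
  · exact one_ne_zero
  · rw [compl_inter]
    exact measure_union_null hμA hνB

theorem Lambda_subset_OmegaSet (hf : Continuous f) (hT : Continuous T)
    (hP : BackwardShadowing T f C)
    (h : IsMinimalSet T (OmegaSet f T) ∨ ∃! μ, IsMaximizing f T μ) (hg : LipschitzWith K g) :
    Lambda f T g ⊆ OmegaSet f T := by
  intro x hx
  have hclosed : IsClosed (LambdaStar f T g) :=
    LambdaStar_eq_tightSet f T g ▸ isClosed_tightSet (hf.sub continuous_const) hT hg.continuous
  have hmaps : MapsTo T (LambdaStar f T g) (LambdaStar f T g) :=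
    LambdaStar_eq_tightSet f T g ▸ mapsTo_tightSet
  obtain ⟨u, rfl, hu, huL⟩ := exists_backward_orbit hT hclosed hmaps hx
  have hfor := limitSet_subset hclosed fun n => hmaps.iterate n (huL 0)
  have hback := limitSet_subset hclosed huL
  have hTfor := mapsTo_limitSet_forward hT (u 0)
  have hTback := mapsTo_limitSet_backward hT hu
  obtain ⟨a, ha, ha'⟩ : (limitSet (fun n => T^[n] (u 0)) ∩ limitSet u).Nonempty := by
    rcases h with hmin | huniq
    · exact hmin.1.mono <| subset_inter
        (OmegaSet_subset_of_isMinimalSet hT hP hmin hg (isClosed_limitSet _)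
          (limitSet_nonempty _) hTfor hfor)
        (OmegaSet_subset_of_isMinimalSet hT hP hmin hg (isClosed_limitSet _)
          (limitSet_nonempty _) hTback hback)
    · exact inter_nonempty_of_existsUnique_isMaximizing hT huniq hg.continuous
        (isClosed_limitSet _) (limitSet_nonempty _) hTfor hfor
        (isClosed_limitSet _) (limitSet_nonempty _) hTback hback
  rw [LambdaStar_eq_tightSet] at huL
  exact mem_nonwanderingSet_of_mem_limitSet (hP.sub_const _) hg hu huL ha ha'

theorem Kset_eq_omega_general (hf : Continuous f) (hT : Continuous T)
    (hP : BackwardShadowing T f C)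
    (h : IsMinimalSet T (OmegaSet f T) ∨ ∃! μ, IsMaximizing f T μ) :
    Kset f T = OmegaSet f T := by
  refine Subset.antisymm (iUnion₂_subset ?_) ?_
  · rintro g ⟨⟨K, hg⟩, -⟩
    exact Lambda_subset_OmegaSet hf hT hP h hg
  · obtain ⟨g, hg⟩ := Gset_nonempty hf hT hP
    exact (OmegaSet_subset_Lambda hf hT hg.2.1).trans (subset_biUnion_of_mem hg)

end Comparison

/-- Lemma 2.5: if `Ω(f,T)` is `T`-minimal, or if `(f,T)` has a unique maximizing measure,
then `K(f,T) = Ω(f,T)`. -/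
theorem Kset_eq_omega (f : CrFun 1) (F : ExpMap 1)
    (h : IsMinimalSet (cmap F.1) (OmegaSet f.1 (cmap F.1)) ∨
      (∃! μ : Measure Circle1, IsMaximizing f.1 (cmap F.1) μ)) :
    Kset f.1 (cmap F.1) = OmegaSet f.1 (cmap F.1) := by
  obtain ⟨C, hP⟩ := exists_backwardShadowing_cmap f.2 F.2
  obtain ⟨K, hf⟩ := exists_lipschitzWith_of_contDiff_coe f.2
  exact Kset_eq_omega_general hf.continuous (continuous_cmap F.2.1.continuous F.2.2.1) hP h
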